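/- The quotient ring k[x]/J_n is toral in the V_n-grading: for every b ∈ ℕ^n, the b-graded component of k[x]/J_n (the image in k[x]/J_n of the k-span of the monomials x^u with V_n u = b) has k-dimension at most 2^{c_{n−1}}; equivalently, the number of equivalence classes of V_n^{-1}[b] modulo L'_n is at most 2^{c_{n−1}} for every b ∈ ℕ^n. -/

import Mathlib

open scoped BigOperators

namespace Veronese

open MvPolynomial

/-- `c m = C(m,2)`. -/
def c (m : ℕ) : ℕ := m.choose 2

variable (n : ℕ)

/-- multiplicity (as ℤ) of the index `i` in the unordered pair `s`. -/
def wt (s : Sym2 (Fin n)) : Fin n → ℤ :=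
  Sym2.lift ⟨fun a b i => (if i = a then 1 else 0) + (if i = b then 1 else 0),
    fun a b => funext fun i => add_comm _ _⟩ s

/-- The Veronese grading map `V_n : ℤ^P → ℤ^n`, sending `e_{ij} ↦ e_i + e_j`. -/
def Vmap : (Sym2 (Fin n) → ℤ) →ₗ[ℤ] (Fin n → ℤ) where
  toFun u := fun i => ∑ s : Sym2 (Fin n), u s * wt n s i
  map_add' u v := funext fun i => by
    simp [add_mul, Finset.sum_add_distrib]
  map_smul' m u := funext fun i => by
    simp [Finset.mul_sum, smul_eq_mul, mul_assoc]

/-- The Veronese lattice `L_n = ker V_n`. -/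
def Llat : Submodule ℤ (Sym2 (Fin n) → ℤ) := LinearMap.ker (Vmap n)

/-- standard basis vector `e_{ij}` of `ℤ^P`. -/
def e (i j : Fin n) : Sym2 (Fin n) → ℤ := Pi.single s(i, j) 1

lemma e_comm (i j : Fin n) : e n i j = e n j i := by
  unfold e; rw [Sym2.eq_swap]

/-- `[ij|ij] = e_{ii} + e_{jj} - 2 e_{ij}`. -/
def minorVec (i j : Fin n) : Sym2 (Fin n) → ℤ := e n i i + e n j j - 2 • e n i j

/-- The principal minor lattice `L'_n`. -/
def L'lat : Submodule ℤ (Sym2 (Fin n) → ℤ) :=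
  Submodule.span ℤ {v | ∃ i j : Fin n, i < j ∧ v = minorVec n i j}

/-- the last index `n` (zero-based: `n-1`) of `Fin n`. -/
def lastIdx (hn : 0 < n) : Fin n := ⟨n - 1, Nat.sub_lt hn one_pos⟩

/-- embedding `[n-1] → [n]`. -/
def ι : Fin (n - 1) → Fin n := Fin.castLE (Nat.sub_le n 1)

/-- `[in|jn] = e_{ij} + e_{nn} - e_{in} - e_{jn}` for `i,j ∈ [n-1]`. -/
def Bvec (hn : 0 < n) : Sym2 (Fin (n - 1)) → (Sym2 (Fin n) → ℤ) :=
  Sym2.lift ⟨fun i j =>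
      e n (ι n i) (ι n j) + e n (lastIdx n hn) (lastIdx n hn)
        - e n (ι n i) (lastIdx n hn) - e n (ι n j) (lastIdx n hn),
    fun i j => by dsimp only; rw [e_comm n (ι n i) (ι n j)]; ring⟩

/-- The family `B'`: `[in|in]` on the diagonal, `2[in|jn]` off it. -/
noncomputable def B'vec (hn : 0 < n) (s : Sym2 (Fin (n - 1))) : Sym2 (Fin n) → ℤ :=
  if s.IsDiag then Bvec n hn s else 2 • Bvec n hn s

/-- multiplicity (as ℕ) of the index `i` in the unordered pair `s`. -/
def wtN (s : Sym2 (Fin n)) : Fin n → ℕ :=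
  Sym2.lift ⟨fun a b i => (if i = a then 1 else 0) + (if i = b then 1 else 0),
    fun a b => funext fun i => add_comm _ _⟩ s

/-- The Veronese degree of an exponent vector `u ∈ ℕ^P`. -/
def VN (u : Sym2 (Fin n) →₀ ℕ) : Fin n → ℕ := fun i => ∑ s : Sym2 (Fin n), u s * wtN n s i

/-- The fiber `V_n^{-1}[b] = {u ∈ ℕ^P : V_n u = b}`. -/
def fiber (b : Fin n → ℕ) : Set (Sym2 (Fin n) →₀ ℕ) := {u | VN n u = b}

/-- natural inclusion `ℕ^P → ℤ^P`. -/
def toZ (u : Sym2 (Fin n) →₀ ℕ) : Sym2 (Fin n) → ℤ := fun s => (u s : ℤ)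

lemma fiber_finite (b : Fin n → ℕ) : (fiber n b).Finite := by
  classical
  have hsub : fiber n b ⊆
      ↑(Finset.Iic ((Finsupp.equivFunOnFinite.symm fun _ => ∑ i, b i) : Sym2 (Fin n) →₀ ℕ)) := by
    intro u hu
    simp only [Finset.coe_Iic, Set.mem_Iic, Finsupp.le_def]
    intro s
    induction s using Sym2.ind with
    | _ i j =>
      have h1 : u s(i, j) * wtN n s(i, j) i ≤ VN n u i :=
        Finset.single_le_sum (f := fun s => u s * wtN n s i)
          (fun s _ => Nat.zero_le _) (Finset.mem_univ s(i, j))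
      have h2 : 1 ≤ wtN n s(i, j) i := by
        simp only [wtN, Sym2.lift_mk, if_pos rfl]
        exact Nat.le_add_right 1 _
      have h3 : u s(i, j) ≤ b i := by
        have hb : VN n u i = b i := congrFun hu i
        calc u s(i, j) ≤ u s(i, j) * wtN n s(i, j) i := Nat.le_mul_of_pos_right _ h2
          _ ≤ VN n u i := h1
          _ = b i := hb
      calc u s(i, j) ≤ b i := h3
        _ ≤ ∑ i, b i := Finset.single_le_sum (fun _ _ => Nat.zero_le _) (Finset.mem_univ _)
        _ = (Finsupp.equivFunOnFinite.symm fun _ => ∑ i, b i) s(i, j) := by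
            simp
  exact Set.Finite.subset (Finset.finite_toSet _) hsub

variable (k : Type*) [Field k]

/-- the polynomial ring `k[x_{ij}]`. -/
abbrev R := MvPolynomial (Sym2 (Fin n)) k

/-- The principal minor ideal `J_n`. -/
noncomputable def Jideal : Ideal (R n k) :=
  Ideal.span {f | ∃ i j : Fin n, i < j ∧ f = X s(i, i) * X s(j, j) - X s(i, j) ^ 2}

/-- The map `x_{ij} ↦ t_i t_j`. -/
noncomputable def veroHom : R n k →ₐ[k] MvPolynomial (Fin n) k :=
  aeval fun s => Sym2.lift ⟨fun a b => X a * X b, fun a b => mul_comm _ _⟩ s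

/-- The second Veronese ideal `I_n`. -/
noncomputable def Iideal : Ideal (R n k) := RingHom.ker (veroHom n k)

/-- A ℤ₂-twisting: an automorphism sending each variable to ± itself. -/
def IsTwisting (φ : R n k ≃ₐ[k] R n k) : Prop :=
  ∀ s : Sym2 (Fin n), φ (X s) = X s ∨ φ (X s) = - X s

/-- `f` is V_n-homogeneous of degree `b`. -/
def VHomog (f : R n k) (b : Fin n → ℕ) : Prop := ∀ u ∈ f.support, VN n u = b

/-- The fiber over `b` as a finite set. -/
noncomputable def fiberFinset (b : Fin n → ℕ) : Finset (Sym2 (Fin n) →₀ ℕ) :=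
  (fiber_finite n b).toFinset

/-- generating function of the canonical (0/1 off-diagonal) representatives of
the fiber over `b`. -/
noncomputable def pplusAt (b : Fin n → ℕ) : R n k :=
  ∑ u ∈ (fiberFinset n b).filter (fun u => ∀ s : Sym2 (Fin n), ¬s.IsDiag → u s ≤ 1),
    monomial u (1 : k)

/-- `p⁺_{n,j}` (for `n` odd): fiber over `(n-2,…,n-2) + e_j`. -/
noncomputable def pplusOdd (j : Fin n) : R n k :=
  pplusAt n k fun i => (n - 2) + if i = j then 1 else 0

/-- `p⁺_n` (for `n` even): fiber over `(n-2,…,n-2)`. -/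
noncomputable def pplusEven : R n k :=
  pplusAt n k fun _ => n - 2

/-- `p_n = ∏_{i<j∈[n-1]} (x_{ij} x_{nn} + x_{in} x_{jn})`. -/
noncomputable def pn (hn : 0 < n) : R n k :=
  ∏ p ∈ Finset.univ.filter (fun p : Fin (n - 1) × Fin (n - 1) => p.1 < p.2),
    (X s(ι n p.1, ι n p.2) * X s(lastIdx n hn, lastIdx n hn)
      + X s(ι n p.1, lastIdx n hn) * X s(ι n p.2, lastIdx n hn))

/-!
Modulo the principal minors, `x_{ij}²` may be replaced by `x_{ii} x_{jj}`. Hence every exponent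
vector is congruent to one whose off-diagonal entries are `0` or `1`, namely its original
off-diagonal entries mod 2, and the diagonal of such a representative is recovered from its degree.
The degree also fixes the parity of each row sum of the off-diagonal part, so for any index `l` the
parities of the entries `u_{il}` follow from those of the entries avoiding `l`. The class of `u` in
its fibre is thus determined by one bit for each of the `C(n-1, 2)` pairs of indices other than `l`.
-/

section Counting

lemma card_quot_le_of_imp {α β : Type*} [Finite β] {r : α → α → Prop} (f : α → β)
    (hf : ∀ x y, f x = f y → r x y) : Nat.card (Quot r) ≤ Nat.card β := by
  refine Nat.card_le_card_of_injective (fun q => f q.out) fun p q hpq => ?_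
  rw [← Quot.out_eq p, ← Quot.out_eq q]
  exact Quot.sound (hf _ _ hpq)

lemma finrank_span_range_le_of_factorsThrough {A M α β : Type*} [Semiring A]
    [StrongRankCondition A] [AddCommMonoid M] [Module A M] [Finite β] {f : α → β} {g : α → M}
    (h : g.FactorsThrough f) :
    Module.finrank A (Submodule.span A (Set.range g)) ≤ Nat.card β := by
  have := Fintype.ofFinite β
  set g' : β → M := Function.extend f g 0
  have range_subset : Set.range g ⊆ Set.range g' := by
    rintro _ ⟨a, rfl⟩
    exact ⟨f a, h.extend_apply 0 a⟩
  have := Module.Finite.span_of_finite A (Set.finite_range g')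
  calc Module.finrank A (Submodule.span A (Set.range g))
      ≤ Module.finrank A (Submodule.span A (Set.range g')) :=
        Submodule.finrank_mono (Submodule.span_mono range_subset)
    _ ≤ Fintype.card β := finrank_range_le_card g'
    _ = Nat.card β := Fintype.card_eq_nat_card

end Counting

section Degree

variable {n}

lemma wtN_mk (i j m : Fin n) :
    wtN n s(i, j) m = (if m = i then 1 else 0) + (if m = j then 1 else 0) := rfl

lemma wtN_eq_zero {s : Sym2 (Fin n)} {i : Fin n} (h : i ∉ s) : wtN n s i = 0 := by
  induction s using Sym2.ind with
  | _ a b =>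
    obtain ⟨ha, hb⟩ : i ≠ a ∧ i ≠ b := by simpa only [Sym2.mem_iff, not_or] using h
    rw [wtN_mk, if_neg ha, if_neg hb]

lemma VN_apply (u : Sym2 (Fin n) →₀ ℕ) (i : Fin n) :
    VN n u i = 2 * u s(i, i) + ∑ j ∈ Finset.univ.erase i, u s(i, j) := by
  have sum_row : ∑ j, u s(i, j) * wtN n s(i, j) i = VN n u i :=
    Finset.sum_of_injOn (fun j => s(i, j)) (fun _ _ _ _ => Sym2.congr_right.mp)
      (fun _ _ => Finset.mem_coe.mpr (Finset.mem_univ _))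
      (fun s _ hs => by
        rw [wtN_eq_zero fun hi => hs ?_, mul_zero]
        obtain ⟨j, rfl⟩ := Sym2.mem_iff_exists.mp hi
        exact ⟨j, Finset.mem_coe.mpr (Finset.mem_univ j), rfl⟩)
      fun _ _ => rfl
  rw [← sum_row, ← Finset.add_sum_erase _ _ (Finset.mem_univ i)]
  congr 1
  · simp only [wtN_mk, if_true]
    ring
  · refine Finset.sum_congr rfl fun j hj => ?_
    rw [wtN_mk, if_pos rfl, if_neg (Finset.ne_of_mem_erase hj).symm, add_zero, mul_one]

lemma VN_add (u v : Sym2 (Fin n) →₀ ℕ) : VN n (u + v) = VN n u + VN n v := by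
  funext i
  simp only [VN, Finsupp.add_apply, Pi.add_apply, add_mul, Finset.sum_add_distrib]

lemma VN_single (s : Sym2 (Fin n)) (m : ℕ) : VN n (Finsupp.single s m) = m • wtN n s := by
  funext i
  simp [VN, Finsupp.single_apply]

lemma eq_of_VN_eq_of_offDiag_eq {u v : Sym2 (Fin n) →₀ ℕ} (hV : VN n u = VN n v)
    (h : ∀ s : Sym2 (Fin n), ¬ s.IsDiag → u s = v s) : u = v := by
  ext s
  induction s using Sym2.ind with
  | _ i j =>
    by_cases hij : i = j
    · subst hij
      have row_sum_eq :
          ∑ j ∈ Finset.univ.erase i, u s(i, j) = ∑ j ∈ Finset.univ.erase i, v s(i, j) :=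
        Finset.sum_congr rfl fun j hj =>
          h _ (Sym2.mk_isDiag_iff.not.mpr (Finset.ne_of_mem_erase hj).symm)
      have degree_eq := congrFun hV i
      rw [VN_apply, VN_apply] at degree_eq
      omega
    · exact h _ (Sym2.mk_isDiag_iff.not.mpr hij)

end Degree

section Parity

variable {n}

lemma natCast_VN_apply (u : Sym2 (Fin n) →₀ ℕ) (i : Fin n) :
    (VN n u i : ZMod 2) = ∑ j ∈ Finset.univ.erase i, (u s(i, j) : ZMod 2) := by
  rw [VN_apply, Nat.cast_add, Nat.cast_mul, Nat.cast_sum, ZMod.natCast_self, zero_mul, zero_add]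

/-- The parities of the exponents of the off-diagonal variables `x_{ij}` with `i, j ≠ l`. -/
def parityAway (l : Fin n) (u : Sym2 (Fin n) →₀ ℕ) :
    {s : Sym2 {i : Fin n // i ≠ l} // ¬ s.IsDiag} → ZMod 2 :=
  fun s => u (s.1.map Subtype.val)

lemma card_parityAway_codomain (l : Fin n) :
    Nat.card ({s : Sym2 {i : Fin n // i ≠ l} // ¬ s.IsDiag} → ZMod 2) = 2 ^ c (n - 1) := by
  rw [Nat.card_fun, Nat.card_zmod, Nat.card_eq_fintype_card, Sym2.card_subtype_not_diag,
    Fintype.card_subtype_compl, Fintype.card_fin, Fintype.card_subtype_eq, c]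

variable {l : Fin n} {u v : Sym2 (Fin n) →₀ ℕ}

lemma natCast_eq_of_parityAway_eq (h : parityAway l u = parityAway l v) {i j : Fin n}
    (hij : i ≠ j) (hi : i ≠ l) (hj : j ≠ l) : (u s(i, j) : ZMod 2) = v s(i, j) :=
  congrFun h ⟨s(⟨i, hi⟩, ⟨j, hj⟩), fun hd => hij (congrArg Subtype.val hd)⟩

lemma natCast_mk_right_eq_of_parityAway_eq (hV : VN n u = VN n v)
    (h : parityAway l u = parityAway l v) {i : Fin n} (hi : i ≠ l) :
    (u s(i, l) : ZMod 2) = v s(i, l) := by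
  have degree_eq : (VN n u i : ZMod 2) = VN n v i := by rw [hV]
  have hl : l ∈ Finset.univ.erase i := Finset.mem_erase.mpr ⟨hi.symm, Finset.mem_univ l⟩
  rw [natCast_VN_apply, natCast_VN_apply, ← Finset.add_sum_erase _ _ hl,
    ← Finset.add_sum_erase _ _ hl] at degree_eq
  have away_eq : ∑ j ∈ (Finset.univ.erase i).erase l, (u s(i, j) : ZMod 2)
      = ∑ j ∈ (Finset.univ.erase i).erase l, (v s(i, j) : ZMod 2) :=
    Finset.sum_congr rfl fun j hj =>
      natCast_eq_of_parityAway_eq h (Finset.ne_of_mem_erase (Finset.mem_of_mem_erase hj)).symm hi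
        (Finset.ne_of_mem_erase hj)
  rwa [away_eq, add_left_inj] at degree_eq

lemma offDiag_natCast_eq_of_parityAway_eq (hV : VN n u = VN n v)
    (h : parityAway l u = parityAway l v) {s : Sym2 (Fin n)} (hs : ¬ s.IsDiag) :
    (u s : ZMod 2) = v s := by
  induction s using Sym2.ind with
  | _ i j =>
    have hij : i ≠ j := Sym2.mk_isDiag_iff.not.mp hs
    by_cases hj : j = l
    · subst hj
      exact natCast_mk_right_eq_of_parityAway_eq hV h hij
    by_cases hi : i = l
    · subst hi
      rw [Sym2.eq_swap]
      exact natCast_mk_right_eq_of_parityAway_eq hV h hj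
    · exact natCast_eq_of_parityAway_eq h hij hi hj

end Parity

section MinorCongruence

/-- The congruence on exponent vectors generated by the principal minors, read as the monomial
substitutions `x_{ii} x_{jj} ↔ x_{ij}²`. -/
noncomputable def minorCon : AddCon (Sym2 (Fin n) →₀ ℕ) :=
  addConGen fun u v => ∃ i j : Fin n, i < j ∧
    u = Finsupp.single s(i, i) 1 + Finsupp.single s(j, j) 1 ∧ v = Finsupp.single s(i, j) 2

variable {n}

/-- The exponent vector `e_{ii} + e_{jj}` of the diagonal monomial with the same degree as
`x_{ij}²`. -/
noncomputable def diagPair : Sym2 (Fin n) → (Sym2 (Fin n) →₀ ℕ) :=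
  Sym2.lift ⟨fun i j => Finsupp.single s(i, i) 1 + Finsupp.single s(j, j) 1,
    fun _ _ => add_comm _ _⟩

lemma diagPair_mk (i j : Fin n) :
    diagPair s(i, j) = Finsupp.single s(i, i) 1 + Finsupp.single s(j, j) 1 := rfl

lemma diagPair_apply_of_not_isDiag (s : Sym2 (Fin n)) {t : Sym2 (Fin n)} (ht : ¬ t.IsDiag) :
    diagPair s t = 0 := by
  induction s using Sym2.ind with
  | _ i j =>
    have ne_loop (m : Fin n) : t ≠ s(m, m) := fun h => ht (h ▸ Sym2.mk_isDiag_iff.mpr rfl)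
    rw [diagPair_mk, Finsupp.add_apply, Finsupp.single_eq_of_ne (ne_loop i),
      Finsupp.single_eq_of_ne (ne_loop j), add_zero]

lemma minorCon_single_two (s : Sym2 (Fin n)) :
    minorCon n (Finsupp.single s 2) (diagPair s) := by
  induction s using Sym2.ind with
  | _ i j =>
    have of_lt {i j : Fin n} (h : i < j) :
        minorCon n (Finsupp.single s(i, j) 2) (diagPair s(i, j)) :=
      (minorCon n).symm (AddConGen.Rel.of _ _ ⟨i, j, h, diagPair_mk i j, rfl⟩)
    rcases lt_trichotomy i j with h | rfl | h
    · exact of_lt h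
    · rw [diagPair_mk, ← Finsupp.single_add]
      exact (minorCon n).refl _
    · rw [Sym2.eq_swap]
      exact of_lt h

lemma minorCon_two_nsmul (q : Sym2 (Fin n) →₀ ℕ) :
    minorCon n (2 • q) (Finsupp.linearCombination ℕ diagPair q) := by
  induction q using Finsupp.induction_linear with
  | zero =>
    rw [smul_zero, LinearMap.map_zero]
    exact (minorCon n).refl 0
  | add p q hp hq =>
    rw [smul_add, LinearMap.map_add]
    exact (minorCon n).add hp hq
  | single s m =>
    have two_smul_single : 2 • Finsupp.single s m = m • Finsupp.single s 2 := by
      simp only [Finsupp.smul_single, smul_eq_mul, mul_comm]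
    rw [two_smul_single, Finsupp.linearCombination_single]
    exact (minorCon n).nsmul m (minorCon_single_two s)

/-- The representative of `u` modulo the principal minors in which every off-diagonal exponent is
reduced mod 2, obtained by trading each factor `x_{ij}²` for `x_{ii} x_{jj}`. -/
noncomputable def offDiagReduce (u : Sym2 (Fin n) →₀ ℕ) : Sym2 (Fin n) →₀ ℕ :=
  u.mapRange (· % 2) rfl + Finsupp.linearCombination ℕ diagPair (u.mapRange (· / 2) rfl)

lemma minorCon_offDiagReduce (u : Sym2 (Fin n) →₀ ℕ) : minorCon n u (offDiagReduce u) := by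
  have mod_add_div : u = u.mapRange (· % 2) rfl + 2 • u.mapRange (· / 2) rfl := by
    ext s
    exact (Nat.mod_add_div (u s) 2).symm
  nth_rewrite 1 [mod_add_div]
  exact (minorCon n).add ((minorCon n).refl _) (minorCon_two_nsmul _)

lemma offDiagReduce_apply_of_not_isDiag (u : Sym2 (Fin n) →₀ ℕ) {s : Sym2 (Fin n)}
    (hs : ¬ s.IsDiag) : offDiagReduce u s = u s % 2 := by
  simp only [offDiagReduce, Finsupp.add_apply, Finsupp.mapRange_apply,
    Finsupp.linearCombination_apply, Finsupp.finsetSum_apply, Finsupp.sum, Finsupp.smul_apply,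
    diagPair_apply_of_not_isDiag _ hs, smul_zero, Finset.sum_const_zero, add_zero]

lemma minorCon_le_ker {M : Type*} [Add M] (f : AddHom (Sym2 (Fin n) →₀ ℕ) M)
    (hf : ∀ i j : Fin n, i < j →
      f (Finsupp.single s(i, i) 1 + Finsupp.single s(j, j) 1) = f (Finsupp.single s(i, j) 2)) :
    minorCon n ≤ AddCon.ker f :=
  AddCon.addConGen_le.mpr <| by
    rintro _ _ ⟨i, j, hij, rfl, rfl⟩
    exact hf i j hij

variable {u v : Sym2 (Fin n) →₀ ℕ}

lemma VN_eq_of_minorCon (h : minorCon n u v) : VN n u = VN n v := by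
  refine minorCon_le_ker ⟨VN n, VN_add⟩ (fun i j _ => ?_) h
  funext m
  simp only [AddHom.coe_mk, VN_add, VN_single, Pi.add_apply, Pi.smul_apply, wtN_mk]
  ring

lemma minorCon_of_parityAway_eq (l : Fin n) (hV : VN n u = VN n v)
    (h : parityAway l u = parityAway l v) : minorCon n u v := by
  have hu := minorCon_offDiagReduce u
  have hv := minorCon_offDiagReduce v
  have rep_eq : offDiagReduce u = offDiagReduce v := by
    refine eq_of_VN_eq_of_offDiag_eq ?_ fun s hs => ?_
    · rw [← VN_eq_of_minorCon hu, hV, VN_eq_of_minorCon hv]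
    · rw [offDiagReduce_apply_of_not_isDiag u hs, offDiagReduce_apply_of_not_isDiag v hs]
      exact (ZMod.natCast_eq_natCast_iff' _ _ 2).mp (offDiag_natCast_eq_of_parityAway_eq hV h hs)
  exact (minorCon n).trans hu (rep_eq ▸ (minorCon n).symm hv)

lemma toZ_sub_mem_L'lat_of_minorCon (h : minorCon n u v) : toZ n u - toZ n v ∈ L'lat n := by
  have toZ_add (a b : Sym2 (Fin n) →₀ ℕ) : toZ n (a + b) = toZ n a + toZ n b :=
    funext fun s => Nat.cast_add (a s) (b s)
  have toZ_single (i j : Fin n) (m : ℕ) : toZ n (Finsupp.single s(i, j) m) = m • e n i j := by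
    funext s
    simp [toZ, e, Finsupp.single_apply, Pi.single_apply, eq_comm]
  refine (Submodule.Quotient.eq _).mp <| minorCon_le_ker
    ((L'lat n).mkQ.toAddMonoidHom.toAddHom.comp ⟨toZ n, toZ_add⟩) (fun i j hij => ?_) h
  refine (Submodule.Quotient.eq _).mpr (Submodule.subset_span ⟨i, j, hij, ?_⟩)
  simp only [AddHom.coe_mk, toZ_add, toZ_single, one_smul, minorVec]

lemma mk_monomial_eq_of_minorCon (h : minorCon n u v) :
    Ideal.Quotient.mk (Jideal n k) (monomial u 1) =
      Ideal.Quotient.mk (Jideal n k) (monomial v 1) := by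
  refine minorCon_le_ker (M := Additive (R n k ⧸ Jideal n k)) (MonoidHom.toAdditiveRight
    ((Ideal.Quotient.mk (Jideal n k)).toMonoidHom.comp (monomialOneHom k _))).toAddHom
    (fun i j hij => ?_) h
  refine Ideal.Quotient.eq.mpr (Ideal.subset_span ⟨i, j, hij, ?_⟩)
  simp only [X, monomial_mul, monomial_pow, Finsupp.smul_single, smul_eq_mul, mul_one, one_pow]
  rfl

lemma map_mk_span_monomial_eq_span_range (b : Fin n → ℕ) :
    (Submodule.span k {f : R n k | ∃ u, VN n u = b ∧ f = monomial u (1 : k)}).map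
      (Ideal.Quotient.mkₐ k (Jideal n k)).toLinearMap =
      Submodule.span k
        (Set.range fun u : fiber n b => Ideal.Quotient.mk (Jideal n k) (monomial u.1 1)) := by
  rw [Submodule.map_span]
  congr 1
  ext x
  constructor
  · rintro ⟨_, ⟨u, hu, rfl⟩, rfl⟩
    exact ⟨⟨u, hu⟩, rfl⟩
  · rintro ⟨u, rfl⟩
    exact ⟨_, ⟨u.1, u.2, rfl⟩, rfl⟩

end MinorCongruence

/-- `k[x]/J_n` is toral in the `V_n`-grading: every `V_n`-graded
component of `k[x]/J_n` has dimension at most `2^{c_{n-1}}`; equivalently every fiber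
has at most `2^{c_{n-1}}` classes modulo `L'_n`. -/
theorem quotient_is_toral (n : ℕ) (hn : 2 ≤ n) (k : Type*) [Field k] :
    (∀ b : Fin n → ℕ,
      Module.finrank k
        ↥((Submodule.span k {f : R n k | ∃ u, VN n u = b ∧ f = monomial u (1 : k)}).map
          (Ideal.Quotient.mkₐ k (Jideal n k)).toLinearMap) ≤ 2 ^ c (n - 1)) ∧
    ∀ b : Fin n → ℕ,
      Nat.card (Quot fun u v : ↥(fiber n b) => toZ n ↑u - toZ n ↑v ∈ L'lat n) ≤
        2 ^ c (n - 1) := by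
  let l : Fin n := lastIdx n (zero_lt_two.trans_le hn)
  have minorCon_of_mem_fiber {b : Fin n → ℕ} (u v : fiber n b)
      (h : parityAway l u.1 = parityAway l v.1) : minorCon n u.1 v.1 :=
    minorCon_of_parityAway_eq l (u.2.trans v.2.symm) h
  rw [← card_parityAway_codomain l]
  refine ⟨fun b => ?_, fun b => ?_⟩
  · rw [map_mk_span_monomial_eq_span_range]
    exact finrank_span_range_le_of_factorsThrough (f := fun u : fiber n b => parityAway l u.1)
      fun u v h => mk_monomial_eq_of_minorCon k (minorCon_of_mem_fiber u v h)
  · exact card_quot_le_of_imp (fun u : fiber n b => parityAway l u.1)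
      fun u v h => toZ_sub_mem_L'lat_of_minorCon (minorCon_of_mem_fiber u v h)

end Veronese
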